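/- Let G be a connected graph of order n and let H be a graph that contains a connected component isomorphic to a complete graph. If n > 2·c(H) + 1 ≥ 5, then pd(G⊙H) ≥ c(H) + 2. -/

import Mathlib

open SimpleGraph

/-!
Let `K` be a complete component of `H` of order `c = c(H)` and let `P` be a resolving partition
of `G ⊙ H` with at most `c + 1` cells. The copy `Kᵢ` of `K` at a vertex `i` of `G` consists of
closed twins, so its `c` vertices lie in different cells. If `P` has only `c` cells, every vertex
of every `Kᵢ` is at distance `1` from all other cells, and vertices of two copies in the same cell
are not resolved. Hence `P` has `c + 1` cells and `Kᵢ` misses exactly one of them, `m i`.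

Let `e i` be the distance from the hub `i` to `m i`. A vertex of `Kᵢ` in the cell `A` has distance
`0` to `A`, `e i + 1` to `m i`, and `1` to all other cells; if `e i ≥ 1` the hub has distance `0`
to its own cell, `e i` to `m i`, and `1` to all other cells. Since `P` is resolving:

* `e i = 0` for at most one `i`;
* if `m i = m j` and `i ≠ j`, then `e i ≠ e j`;
* if `m i = m j`, then `e i ≠ e j + 1` (compare the hub `i` with the vertex of `Kⱼ` in its cell).

Moreover, if `e i ≥ 3`, a shortest path from `i` to `m i` starts with a step to another hub `j`,
for which `m j = m i` and `e i = e j + 1`; so `e i ≤ 2` always. Two indices with `e ≥ 1` and the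
same `m` would have values of `e` at least two apart, the larger being at least `3`. So
`m` is injective on `{i | e i ≥ 1}`, which gives `n - 1 ≤ c + 1`, contradicting `n > 2 c + 1`.
-/

/-- The corona product `G ⊙ H`: one copy of `G`, one copy of `H` for each vertex of `G`,
with the `i`-th vertex of `G` joined to every vertex of the `i`-th copy of `H`. -/
def corona {α β : Type*} (G : SimpleGraph α) (H : SimpleGraph β) :
    SimpleGraph (α ⊕ α × β) :=
  SimpleGraph.fromRel (fun x y =>
    match x, y with
    | Sum.inl a, Sum.inl b => G.Adj a b
    | Sum.inl a, Sum.inr iu => a = iu.1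
    | Sum.inr iu, Sum.inr jw => iu.1 = jw.1 ∧ H.Adj iu.2 jw.2
    | _, _ => False)

/-- The distance from a vertex to a set of vertices: `d(v,A) = min_{u ∈ A} d(v,u)`. -/
noncomputable def setDist {α : Type*} (G : SimpleGraph α) (v : α) (A : Set α) : ℕ :=
  sInf (G.dist v '' A)

/-- `S` is a resolving set for `G`: distinct vertices have distinct metric representations. -/
def IsResolvingSet {α : Type*} (G : SimpleGraph α) (S : Set α) : Prop :=
  ∀ u v : α, (∀ w ∈ S, G.dist u w = G.dist v w) → u = v

/-- The metric dimension of `G`: minimum cardinality of a resolving set. -/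
noncomputable def metricDim {α : Type*} (G : SimpleGraph α) : ℕ :=
  sInf {k | ∃ S : Set α, IsResolvingSet G S ∧ S.ncard = k}

/-- A family of sets is a resolving partition for `G` if it is a partition of the vertex set
into nonempty cells and distinct vertices have distinct partition representations. -/
def IsResolvingPartition {α : Type*} (G : SimpleGraph α) (P : Set (Set α)) : Prop :=
  (∀ A ∈ P, A.Nonempty) ∧ (∀ v : α, ∃! A : Set α, A ∈ P ∧ v ∈ A) ∧
    ∀ u v : α, (∀ A ∈ P, setDist G u A = setDist G v A) → u = v

/-- The partition dimension of `G`: minimum number of cells in a resolving partition. -/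
noncomputable def partitionDim {α : Type*} (G : SimpleGraph α) : ℕ :=
  sInf {t | ∃ P : Set (Set α), IsResolvingPartition G P ∧ P.ncard = t}

/-- `c(H)`: the maximum cardinality of a connected component of `H` which is isomorphic to a
complete graph (i.e. whose vertex set is a clique). -/
noncomputable def maxCompleteComp {β : Type*} (H : SimpleGraph β) : ℕ :=
  sSup {k | ∃ C : H.ConnectedComponent, H.IsClique C.supp ∧ C.supp.ncard = k}

/-- `β(H)`: the number of isolated vertices of `H`. -/
noncomputable def numIsolated {β : Type*} (H : SimpleGraph β) : ℕ :=
  Set.ncard {v : β | ∀ u, ¬ H.Adj v u}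

/-- `α(H)`: the number of connected components of `H` of order greater than one. -/
noncomputable def numBigComp {β : Type*} (H : SimpleGraph β) : ℕ :=
  Set.ncard {C : H.ConnectedComponent | 1 < C.supp.ncard}

/-! ### Distance to a set -/

section SetDist

variable {α : Type*} {Γ : SimpleGraph α}

lemma setDist_le {x a : α} {A : Set α} (ha : a ∈ A) : setDist Γ x A ≤ Γ.dist x a :=
  Nat.sInf_le ⟨a, ha, rfl⟩

lemma exists_setDist_eq (x : α) {A : Set α} (hA : A.Nonempty) :
    ∃ a ∈ A, Γ.dist x a = setDist Γ x A :=
  Nat.sInf_mem (hA.image (Γ.dist x))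

lemma setDist_eq_zero_of_mem {x : α} {A : Set α} (hx : x ∈ A) : setDist Γ x A = 0 := by
  have := setDist_le (Γ := Γ) (x := x) hx
  simpa using this

lemma mem_of_setDist_eq_zero (hc : Γ.Connected) {x : α} {A : Set α} (hA : A.Nonempty)
    (h : setDist Γ x A = 0) : x ∈ A := by
  obtain ⟨a, ha, hd⟩ := exists_setDist_eq (Γ := Γ) x hA
  rw [h, hc.dist_eq_zero_iff] at hd
  exact hd ▸ ha

lemma setDist_le_of_adj (hc : Γ.Connected) {x y : α} {A : Set α} (hA : A.Nonempty)
    (h : Γ.Adj x y) : setDist Γ x A ≤ setDist Γ y A + 1 := by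
  obtain ⟨a, ha, hd⟩ := exists_setDist_eq (Γ := Γ) y hA
  have h1 := setDist_le (Γ := Γ) (x := x) ha
  have h2 := hc.dist_triangle (u := x) (v := y) (w := a)
  have h3 : Γ.dist x y = 1 := dist_eq_one_iff_adj.mpr h
  omega

lemma setDist_eq_one (hc : Γ.Connected) {x y : α} {A : Set α}
    (h : Γ.Adj x y) (hy : y ∈ A) (hx : x ∉ A) : setDist Γ x A = 1 := by
  have h1 := setDist_le_of_adj hc ⟨y, hy⟩ h
  rw [setDist_eq_zero_of_mem hy] at h1
  have h2 : setDist Γ x A ≠ 0 := fun h0 => hx (mem_of_setDist_eq_zero hc ⟨y, hy⟩ h0)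
  omega

/-- The first step of a shortest path towards `A`. -/
lemma exists_adj_setDist (hc : Γ.Connected) {x : α} {A : Set α} (hA : A.Nonempty) {k : ℕ}
    (h : setDist Γ x A = k + 1) : ∃ y, Γ.Adj x y ∧ setDist Γ y A = k := by
  obtain ⟨a, ha, hd⟩ := exists_setDist_eq (Γ := Γ) x hA
  obtain ⟨p, hp⟩ := hc.exists_walk_length_eq_dist x a
  cases p with
  | nil =>
    rw [dist_self] at hd
    omega
  | cons hadj q =>
    rename_i y
    refine ⟨y, hadj, ?_⟩
    have h1 := setDist_le (Γ := Γ) (x := y) ha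
    have h2 := dist_le q
    have h3 := setDist_le_of_adj hc hA hadj
    simp only [Walk.length_cons] at hp
    omega

lemma setDist_twin_le (hc : Γ.Connected) {x y : α} {A : Set α} (hA : A.Nonempty)
    (ht : ∀ z, Γ.Adj x z → z = y ∨ Γ.Adj y z) (hx : x ∉ A) :
    setDist Γ y A ≤ setDist Γ x A := by
  obtain ⟨k, hk⟩ : ∃ k, setDist Γ x A = k + 1 :=
    Nat.exists_eq_succ_of_ne_zero fun h0 => hx (mem_of_setDist_eq_zero hc hA h0)
  obtain ⟨z, hz, hzk⟩ := exists_adj_setDist hc hA hk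
  rcases ht z hz with rfl | h
  · omega
  · have := setDist_le_of_adj hc hA h
    omega

/-- If `S` can be left only through `v`, every path from `S` to a set disjoint from `S` passes
through `v`. -/
lemma setDist_lt_of_separated (hc : Γ.Connected) {S A : Set α} {v : α} (hA : A.Nonempty)
    (hS : ∀ x ∈ S, ∀ z, Γ.Adj x z → z = v ∨ z ∈ S) (hd : ∀ x ∈ S, x ∉ A) (k : ℕ) :
    ∀ x ∈ S, setDist Γ x A = k → setDist Γ v A < k := by
  induction k with
  | zero => exact fun x hx h => absurd (mem_of_setDist_eq_zero hc hA h) (hd x hx)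
  | succ k ih =>
    intro x hx h
    obtain ⟨z, hz, hzk⟩ := exists_adj_setDist hc hA h
    rcases hS x hx z hz with rfl | hzS
    · omega
    · have := ih z hzS hzk
      omega

end SetDist

/-! ### The corona product -/

section Corona

variable {V W : Type*} {G : SimpleGraph V} {H : SimpleGraph W}

lemma corona_adj_inl_inl {a b : V} : (corona G H).Adj (.inl a) (.inl b) ↔ G.Adj a b := by
  simp only [corona, fromRel_adj, ne_eq, Sum.inl.injEq]
  constructor
  · rintro ⟨-, h | h⟩
    exacts [h, h.symm]
  · exact fun h => ⟨h.ne, .inl h⟩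

lemma corona_adj_inl_inr {a i : V} {w : W} :
    (corona G H).Adj (.inl a) (.inr (i, w)) ↔ a = i := by
  simp [corona, fromRel_adj]

lemma corona_adj_inr_inl {a i : V} {w : W} :
    (corona G H).Adj (.inr (i, w)) (.inl a) ↔ a = i := by
  rw [adj_comm, corona_adj_inl_inr]

lemma corona_adj_inr_inr {i j : V} {w u : W} :
    (corona G H).Adj (.inr (i, w)) (.inr (j, u)) ↔ i = j ∧ H.Adj w u := by
  simp only [corona, fromRel_adj, ne_eq, Sum.inr.injEq, Prod.mk.injEq]
  constructor
  · rintro ⟨-, ⟨h1, h2⟩ | ⟨h1, h2⟩⟩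
    exacts [⟨h1, h2⟩, ⟨h1.symm, h2.symm⟩]
  · exact fun h => ⟨fun h' => h.2.ne h'.2, .inl h⟩

lemma corona_connected (hG : G.Connected) : (corona G H).Connected := by
  have hn := hG.nonempty
  let φ : G →g corona G H := ⟨Sum.inl, fun h => corona_adj_inl_inl.mpr h⟩
  obtain ⟨v₀⟩ := hn
  have key : ∀ x, (corona G H).Reachable x (.inl v₀) := by
    rintro (a | ⟨i, w⟩)
    · exact (hG.preconnected a v₀).map φ
    · exact (corona_adj_inr_inl.mpr rfl : (corona G H).Adj (.inr (i, w)) (.inl i)).reachable.trans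
        ((hG.preconnected i v₀).map φ)
  have : Nonempty (V ⊕ V × W) := ⟨.inl v₀⟩
  exact ⟨fun x y => (key x).trans (key y).symm⟩

end Corona

/-! ### Resolving partitions of the corona -/

section Main

variable {V W : Type*} [Fintype V] [Fintype W] {G : SimpleGraph V} {H : SimpleGraph W}

/-- The partition into singletons is resolving, so the infimum defining `partitionDim` is
attained. -/
lemma exists_resolvingPartition {α : Type*} {Γ : SimpleGraph α} (hc : Γ.Connected) :
    ∃ P, IsResolvingPartition Γ P ∧ P.ncard = partitionDim Γ := by
  have hne : {t | ∃ P : Set (Set α), IsResolvingPartition Γ P ∧ P.ncard = t}.Nonempty := by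
    refine ⟨_, Set.range (fun x : α => ({x} : Set α)), ⟨?_, ?_, ?_⟩, rfl⟩
    · rintro _ ⟨x, rfl⟩
      exact Set.singleton_nonempty x
    · intro v
      refine ⟨{v}, ⟨⟨v, rfl⟩, rfl⟩, ?_⟩
      rintro _ ⟨⟨x, rfl⟩, hx⟩
      rw [Set.mem_singleton_iff] at hx
      rw [hx]
    · intro u v h
      have h1 := h {u} ⟨u, rfl⟩
      rw [setDist_eq_zero_of_mem (Set.mem_singleton u)] at h1
      exact (mem_of_setDist_eq_zero hc (Set.singleton_nonempty u) h1.symm).symm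
  exact Nat.sInf_mem hne

/-- A complete component of order `c ≥ 2` forces at least `c + 2` cells. -/
lemma ncard_ge_of_clique (hG : G.Connected) {c : ℕ} (hc2 : 2 ≤ c)
    (hn : 2 * c + 1 < Fintype.card V) {C : H.ConnectedComponent} (hK : H.IsClique C.supp)
    (hcard : C.supp.ncard = c) {P : Set (Set (V ⊕ V × W))}
    (hP : IsResolvingPartition (corona G H) P) : c + 2 ≤ P.ncard := by
  classical
  by_contra! hlt
  have hΓ : (corona G H).Connected := corona_connected hG
  obtain ⟨hPne, hPun, hPres⟩ := hP
  have hPfin : P.Finite := Set.toFinite P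
  have hcell : ∀ {A B x}, A ∈ P → B ∈ P → x ∈ A → x ∈ B → A = B :=
    fun hA hB hxA hxB => (hPun _).unique ⟨hA, hxA⟩ ⟨hB, hxB⟩
  choose f hf using fun x => (hPun x).exists
  -- the vertices of `Kᵢ` are closed twins
  have htwin : ∀ i, ∀ w ∈ C.supp, ∀ u ∈ C.supp, ∀ z, (corona G H).Adj (.inr (i, w)) z →
      z = .inr (i, u) ∨ (corona G H).Adj (.inr (i, u)) z := by
    rintro i w hw u hu (a | ⟨j, y⟩) hz
    · right
      rw [corona_adj_inr_inl] at hz ⊢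
      exact hz
    · rw [corona_adj_inr_inr] at hz
      obtain ⟨rfl, hz⟩ := hz
      have hy : y ∈ C.supp := C.mem_supp_of_adj_mem_supp hw hz
      by_cases hyu : y = u
      · left; rw [hyu]
      · right
        exact corona_adj_inr_inr.mpr ⟨rfl, hK hu hy (Ne.symm hyu)⟩
  have hinj : ∀ i, Set.InjOn (fun w => f (.inr (i, w))) C.supp := by
    intro i w hw u hu hwu
    have : (Sum.inr (i, w) : V ⊕ V × W) = .inr (i, u) := by
      apply hPres
      intro B hB
      have hfw := hf (.inr (i, w))
      have hfu := hf (.inr (i, u))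
      simp only at hwu
      by_cases hwB : .inr (i, w) ∈ B
      · have h1 : f (.inr (i, w)) = B := hcell hfw.1 hB hfw.2 hwB
        rw [setDist_eq_zero_of_mem hwB, setDist_eq_zero_of_mem]
        rw [← h1, hwu]
        exact hfu.2
      · have huB : .inr (i, u) ∉ B := fun h => hwB (by
          have h1 : f (.inr (i, u)) = B := hcell hfu.1 hB hfu.2 h
          rw [← h1, ← hwu]
          exact hfw.2)
        exact le_antisymm (setDist_twin_le hΓ (hPne B hB) (htwin i u hu w hw) huB)
          (setDist_twin_le hΓ (hPne B hB) (htwin i w hw u hu) hwB)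
    simpa using this
  have himg : ∀ i, ((fun w => f (.inr (i, w))) '' C.supp).ncard = c := fun i => by
    rw [(hinj i).ncard_image, hcard]
  have hsub : ∀ i, (fun w => f (.inr (i, w))) '' C.supp ⊆ P := by
    rintro i _ ⟨w, -, rfl⟩
    exact (hf _).1
  have hdiff : ∀ i, (P \ ((fun w => f (.inr (i, w))) '' C.supp)).ncard + c = P.ncard := by
    intro i
    have := Set.ncard_sdiff_add_ncard_of_subset (hsub i) hPfin
    rwa [himg i] at this
  -- distance `1` from a vertex of `Kᵢ` to any other cell met by `Kᵢ`
  have hone : ∀ i, ∀ w ∈ C.supp, ∀ u ∈ C.supp, ∀ B, .inr (i, u) ∈ B → .inr (i, w) ∉ B →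
      setDist (corona G H) (.inr (i, w)) B = 1 := by
    intro i w hw u hu B huB hwB
    have hne : w ≠ u := by rintro rfl; exact hwB huB
    exact setDist_eq_one hΓ (corona_adj_inr_inr.mpr ⟨rfl, hK hw hu hne⟩) huB hwB
  have hVnt : Nontrivial V := Fintype.one_lt_card_iff_nontrivial.mp (by omega)
  have hPcard : P.ncard = c + 1 := by
    by_contra hPc
    have hall : ∀ i, ∀ B ∈ P, ∃ w ∈ C.supp, .inr (i, w) ∈ B := by
      intro i B hB
      have h0 : (P \ ((fun w => f (.inr (i, w))) '' C.supp)).ncard = 0 := by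
        have := hdiff i
        omega
      rw [Set.ncard_eq_zero (hPfin.sdiff)] at h0
      have hB' : B ∈ (fun w => f (.inr (i, w))) '' C.supp := by
        by_contra hB'
        exact (h0 ▸ (⟨hB, hB'⟩ : B ∈ P \ _) : B ∈ (∅ : Set _))
      obtain ⟨w, hw, rfl⟩ := hB'
      exact ⟨w, hw, (hf _).2⟩
    obtain ⟨i, j, hij⟩ := exists_pair_ne V
    have hA := (hf (.inl i)).1
    obtain ⟨w, hw, hwA⟩ := hall i _ hA
    obtain ⟨u, hu, huA⟩ := hall j _ hA
    have : (Sum.inr (i, w) : V ⊕ V × W) = .inr (j, u) := by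
      apply hPres
      intro B hB
      by_cases hBA : B = f (.inl i)
      · rw [hBA, setDist_eq_zero_of_mem hwA, setDist_eq_zero_of_mem huA]
      · obtain ⟨w', hw', hwB⟩ := hall i _ hB
        obtain ⟨u', hu', huB⟩ := hall j _ hB
        rw [hone i w hw w' hw' B hwB fun h => hBA (hcell hB hA h hwA),
          hone j u hu u' hu' B huB fun h => hBA (hcell hB hA h huA)]
    simp only [Sum.inr.injEq, Prod.mk.injEq] at this
    exact hij this.1
  -- the unique cell missed by `Kᵢ`
  have hm : ∀ i, ∃ m ∈ P, (∀ w ∈ C.supp, .inr (i, w) ∉ m) ∧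
      ∀ B ∈ P, B ≠ m → ∃ w ∈ C.supp, .inr (i, w) ∈ B := by
    intro i
    have h1 : (P \ ((fun w => f (.inr (i, w))) '' C.supp)).ncard = 1 := by
      have := hdiff i
      omega
    obtain ⟨m, hm⟩ := Set.ncard_eq_one.mp h1
    have hmm : m ∈ P \ ((fun w => f (.inr (i, w))) '' C.supp) := hm ▸ Set.mem_singleton m
    refine ⟨m, hmm.1, fun w hw hwm => hmm.2 ⟨w, hw, ?_⟩, fun B hB hBm => ?_⟩
    · exact hcell (hf _).1 hmm.1 (hf _).2 hwm
    · have hB' : B ∈ (fun w => f (.inr (i, w))) '' C.supp := by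
        by_contra hB'
        have : B ∈ ({m} : Set _) := hm ▸ (⟨hB, hB'⟩ : B ∈ P \ _)
        exact hBm this
      obtain ⟨w, hw, rfl⟩ := hB'
      exact ⟨w, hw, (hf _).2⟩
  choose m hmP hmiss hmeet using hm
  obtain ⟨e, he⟩ : ∃ e : V → ℕ, ∀ i, setDist (corona G H) (.inl i) (m i) = e i := ⟨_, fun _ => rfl⟩
  have hKm : ∀ i, ∀ w ∈ C.supp, setDist (corona G H) (.inr (i, w)) (m i) = e i + 1 := by
    intro i w hw
    have h1 := setDist_le_of_adj hΓ (hPne _ (hmP i))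
      (corona_adj_inr_inl.mpr rfl : (corona G H).Adj (.inr (i, w)) (.inl i))
    have h2 := setDist_lt_of_separated hΓ (S := {x | ∃ u ∈ C.supp, x = .inr (i, u)})
      (v := .inl i) (hPne _ (hmP i)) (by
        rintro _ ⟨u, hu, rfl⟩ (a | ⟨j, y⟩) hz
        · left; rw [corona_adj_inr_inl.mp hz]
        · right
          obtain ⟨rfl, hz'⟩ := corona_adj_inr_inr.mp hz
          exact ⟨y, C.mem_supp_of_adj_mem_supp hu hz', rfl⟩)
      (by rintro _ ⟨u, hu, rfl⟩; exact hmiss i u hu) _ _ ⟨w, hw, rfl⟩ rfl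
    rw [he] at h1 h2
    omega
  -- representation of the vertices of `Kᵢ`
  have hrepK : ∀ i, ∀ w ∈ C.supp, ∀ A ∈ P, .inr (i, w) ∈ A → ∀ B ∈ P,
      setDist (corona G H) (.inr (i, w)) B = if B = A then 0 else if B = m i then e i + 1 else 1 := by
    intro i w hw A hA hwA B hB
    split_ifs with h1 h2
    · rw [h1, setDist_eq_zero_of_mem hwA]
    · rw [h2, hKm i w hw]
    · obtain ⟨u, hu, huB⟩ := hmeet i B hB h2
      exact hone i w hw u hu B huB fun h => h1 (hcell hB hA h hwA)
  -- representation of a hub; if it lies in `m i` then `e i = 0`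
  have hrepV : ∀ i, ∀ A ∈ P, .inl i ∈ A → ∀ B ∈ P,
      setDist (corona G H) (.inl i) B = if B = A then 0 else if B = m i then e i else 1 := by
    intro i A hA hiA B hB
    split_ifs with h1 h2
    · rw [h1, setDist_eq_zero_of_mem hiA]
    · rw [h2, he i]
    · obtain ⟨u, hu, huB⟩ := hmeet i B hB h2
      exact setDist_eq_one hΓ (corona_adj_inl_inr.mpr rfl) huB
        fun h => h1 (hcell hB hA h hiA)
  have hcommon : ∀ i j, ∃ A ∈ P, A ≠ m i ∧ A ≠ m j := by
    intro i j
    have h2 : ({m i, m j} : Set (Set (V ⊕ V × W))).ncard < P.ncard := by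
      have := Set.ncard_insert_le (m i) {m j}
      rw [Set.ncard_singleton] at this
      omega
    obtain ⟨A, hA, hA'⟩ := Set.exists_mem_notMem_of_ncard_lt_ncard h2
    simp only [Set.mem_insert_iff, Set.mem_singleton_iff, not_or] at hA'
    exact ⟨A, hA, hA'⟩
  have hL : ∀ i j, e i = e j → (m i = m j ∨ e i = 0) → i = j := by
    intro i j hij hor
    obtain ⟨A, hA, hAi, hAj⟩ := hcommon i j
    obtain ⟨w, hw, hwA⟩ := hmeet i A hA hAi
    obtain ⟨u, hu, huA⟩ := hmeet j A hA hAj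
    have : (Sum.inr (i, w) : V ⊕ V × W) = .inr (j, u) := by
      apply hPres
      intro B hB
      rw [hrepK i w hw A hA hwA B hB, hrepK j u hu A hA huA B hB]
      rcases hor with h | h
      · rw [h, hij]
      · rw [← hij, h]
        simp
    simp only [Sum.inr.injEq, Prod.mk.injEq] at this
    exact this.1
  have hL3 : ∀ i j, m i = m j → e i ≠ e j + 1 := by
    intro i j hm hij
    have hfi := hf (.inl i)
    have hne : f (.inl i) ≠ m j := by
      intro h
      have h0 := he i
      rw [hm, setDist_eq_zero_of_mem (h ▸ hfi.2)] at h0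
      omega
    obtain ⟨w, hw, hwA⟩ := hmeet j _ hfi.1 hne
    have : (Sum.inl i : V ⊕ V × W) = .inr (j, w) := by
      apply hPres
      intro B hB
      rw [hrepV i _ hfi.1 hfi.2 B hB, hrepK j w hw _ hfi.1 hwA B hB, hm, hij]
    cases this
  have hL4 : ∀ i, e i < 3 := by
    intro i
    by_contra! h3
    obtain ⟨k, hk⟩ : ∃ k, e i = k + 1 := Nat.exists_eq_succ_of_ne_zero (by omega)
    obtain ⟨y, hy, hyk⟩ := exists_adj_setDist hΓ (hPne _ (hmP i)) ((he i).trans hk)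
    have hhub : ∀ a u, .inr (a, u) ∈ m i → setDist (corona G H) (.inl a) (m i) ≤ 1 := by
      intro a u hu
      have := setDist_le_of_adj hΓ ⟨_, hu⟩
        (corona_adj_inl_inr.mpr rfl : (corona G H).Adj (.inl a) (.inr (a, u)))
      rwa [setDist_eq_zero_of_mem hu] at this
    rcases y with j | ⟨j, u⟩
    · have hmj : m i = m j := by
        by_contra hne
        obtain ⟨u, -, hu⟩ := hmeet j _ (hmP i) hne
        have := hhub j u hu
        omega
      refine hL3 i j hmj ?_
      rw [← he j, ← hmj, hyk, hk]
    · -- the copy of `H` at `i` avoids `m i`, so stepping into it cannot shorten the distance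
      obtain rfl : i = j := corona_adj_inl_inr.mp hy
      have h2 := setDist_lt_of_separated hΓ (S := {x | ∃ u, x = .inr (i, u)})
        (v := .inl i) (hPne _ (hmP i)) (by
          rintro _ ⟨u, rfl⟩ (a | ⟨j, y⟩) hz
          · left; rw [corona_adj_inr_inl.mp hz]
          · right
            obtain ⟨rfl, hz⟩ := corona_adj_inr_inr.mp hz
            exact ⟨y, rfl⟩)
        (by
          rintro _ ⟨u, rfl⟩ hu
          have := hhub i u hu
          rw [he i] at this
          omega) _ _ ⟨u, rfl⟩ hyk
      rw [he i] at h2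
      omega
  have hminj : Set.InjOn m {i | e i ≠ 0} := by
    intro i hi j hj hij
    simp only [Set.mem_ofPred_eq] at hi hj
    have h1 := hL4 i
    have h2 := hL4 j
    have h3 := hL3 i j hij
    have h4 := hL3 j i hij.symm
    exact hL i j (by omega) (.inl hij)
  have hle : {i | e i ≠ 0}.ncard ≤ c + 1 := by
    rw [← hPcard]
    exact Set.ncard_le_ncard_of_injOn m (fun i _ => hmP i) hminj hPfin
  have hzero : {i | e i = 0}.ncard ≤ 1 := by
    rw [Set.ncard_le_one]
    intro i hi j hj
    simp only [Set.mem_ofPred_eq] at hi hj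
    exact hL i j (by omega) (.inr hi)
  have hsum := Set.ncard_add_ncard_compl {i | e i = 0}
  have hcompl : {i | e i = 0}ᶜ = {i | e i ≠ 0} := rfl
  rw [hcompl, Nat.card_eq_fintype_card] at hsum
  omega

end Main

/-- Let `G` be a connected graph of order `n` and let `H` be a graph containing a
connected component isomorphic to a complete graph, with `c(H)` the maximum cardinality of such
a component. If `n > 2·c(H) + 1 ≥ 5`, then `pd(G⊙H) ≥ c(H) + 2`. -/
theorem stmt9 {V W : Type*} [Fintype V] [Fintype W] (G : SimpleGraph V) (H : SimpleGraph W)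
    (hG : G.Connected) (n : ℕ) (hn : Fintype.card V = n)
    (hcomp : ∃ C : H.ConnectedComponent, H.IsClique C.supp)
    (h₁ : n > 2 * maxCompleteComp H + 1) (h₂ : 2 * maxCompleteComp H + 1 ≥ 5) :
    partitionDim (corona G H) ≥ maxCompleteComp H + 2 := by
  have hmem : maxCompleteComp H ∈
      {k | ∃ C : H.ConnectedComponent, H.IsClique C.supp ∧ C.supp.ncard = k} := by
    refine Nat.sSup_mem ?_ ⟨Nat.card W, ?_⟩
    · obtain ⟨C, hC⟩ := hcomp
      exact ⟨_, C, hC, rfl⟩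
    · rintro _ ⟨C, -, rfl⟩
      exact Set.ncard_le_card _
  obtain ⟨C, hC, hcard⟩ := hmem
  obtain ⟨P, hP, hPd⟩ := exists_resolvingPartition (corona_connected (H := H) hG)
  rw [← hPd]
  exact ncard_ge_of_clique hG (by omega) (by omega) hC hcard hP
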